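/- Let L be an invertible real m×m matrix and let N : ℝ^m → ℝ^m be continuously differentiable in a neighborhood of x*, positively homogeneous of degree p with p ≠ 1, and satisfy L x* = N(x*) and ⟨N(x*), x*⟩ ≠ 0. Let γ = p/(p − 1) and F(x) = m(x)^γ·L⁻¹N(x) with m(x) = ⟨Lx, x⟩/⟨N(x), x⟩, and set S = L⁻¹N'(x*). Then the characteristic polynomials satisfy (X − p)·charpoly(F'(x*)) = X·charpoly(S): the Petviashvili method with optimal parameter replaces the eigenvalue p of S by 0 and preserves the rest of the spectrum of S with multiplicity. -/

import Mathlib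

/-!
Differentiating positive homogeneity along the ray through the fixed point `x` gives Euler's
identity `N' x = p • N x`, so `x` is an eigenvector of `S = L⁻¹N'` with eigenvalue `p`. The
stabilizing factor equals `1` at `x`, and its derivative turns `F'` into the rank-one perturbation
`S + φ(·) x` with `φ v = γ ⟨L v - N' v, x⟩ / ⟨N x, x⟩`. By Brauer's theorem, perturbing along an
eigenvector moves only its own eigenvalue, here from `p` to `p + φ x`. Since `φ x = γ (1 - p)`, the
choice `γ = p / (p - 1)` is the one that moves it to `0`.

After a shift, Brauer's theorem is the case of eigenvalue `0`, where `A * (x wᵀ) = 0` yields the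
factorization `X (X - A - x wᵀ) = (X - A) (X - x wᵀ)`.
-/

open Matrix Polynomial

section RankOnePerturbation

variable {R n : Type*} [CommRing R] [Fintype n] [DecidableEq n]

theorem X_pow_mul_charpoly_add_of_mul_eq_zero {A B : Matrix n n R} (hAB : A * B = 0) :
    X ^ Fintype.card n * (A + B).charpoly = A.charpoly * B.charpoly := by
  have hfactor : (X : R[X]) • charmatrix (A + B) = charmatrix A * charmatrix B := by
    have hmap : (C : R →+* R[X]).mapMatrix A * (C : R →+* R[X]).mapMatrix B = 0 := by
      rw [← map_mul, hAB, map_zero]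
    simp only [charmatrix, map_add, sub_mul, mul_sub, hmap, scalar_apply, ← smul_one_eq_diagonal,
      smul_mul_assoc, mul_smul_comm, one_mul, mul_one, smul_sub, smul_add]
    abel
  rw [charpoly, charpoly, charpoly, ← det_smul, hfactor, det_mul]

theorem X_mul_charpoly_vecMulVec (u v : n → R) :
    X * (vecMulVec u v).charpoly = X ^ Fintype.card n * (X - C (u ⬝ᵥ v)) := by
  rw [charpoly_vecMulVec, smul_eq_C_mul]
  cases isEmpty_or_nonempty n
  · simp
  · rw [mul_sub, mul_left_comm, mul_pow_sub_one Fintype.card_ne_zero]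
    ring

theorem X_mul_charpoly_add_vecMulVec {A : Matrix n n R} {x : n → R} (hx : A *ᵥ x = 0) (w : n → R) :
    X * (A + vecMulVec x w).charpoly = (X - C (x ⬝ᵥ w)) * A.charpoly := by
  have hzero : A * vecMulVec x w = 0 := by rw [mul_vecMulVec, hx, zero_vecMulVec]
  apply (isRegular_X_pow (Fintype.card n)).left
  linear_combination X * X_pow_mul_charpoly_add_of_mul_eq_zero hzero +
    A.charpoly * X_mul_charpoly_vecMulVec x w

theorem charpoly_sub_scalar_comp_X_sub_C (A : Matrix n n R) (μ : R) :
    (A - scalar n μ).charpoly.comp (X - C μ) = A.charpoly := by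
  rw [charpoly_sub_scalar, comp_assoc, add_comp, X_comp, C_comp, sub_add_cancel, comp_X]

theorem X_sub_C_mul_charpoly_add_vecMulVec {A : Matrix n n R} {x : n → R} {μ : R}
    (hx : A *ᵥ x = μ • x) (w : n → R) :
    (X - C μ) * (A + vecMulVec x w).charpoly = (X - C (μ + x ⬝ᵥ w)) * A.charpoly := by
  have hker : (A - scalar n μ) *ᵥ x = 0 := by
    rw [sub_mulVec, hx, scalar_apply, ← smul_one_eq_diagonal, smul_mulVec, one_mulVec, sub_self]
  have hshift := congrArg (comp · (X - C μ)) (X_mul_charpoly_add_vecMulVec hker w)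
  simpa only [mul_comp, sub_comp, X_comp, C_comp, sub_add_eq_add_sub,
    charpoly_sub_scalar_comp_X_sub_C, C_add, sub_sub] using hshift

theorem X_sub_C_mul_charpoly_add_smulRight {M : Type*} [AddCommGroup M] [Module R M]
    [Module.Free R M] [Module.Finite R M] {f : M →ₗ[R] M} {x : M} {μ : R} (hx : f x = μ • x)
    (φ : M →ₗ[R] R) :
    (X - C μ) * (f + φ.smulRight x).charpoly = (X - C (μ + φ x)) * f.charpoly := by
  let b := Module.Free.chooseBasis R M
  have heigen : LinearMap.toMatrix b b f *ᵥ b.repr x = μ • b.repr x := by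
    rw [LinearMap.toMatrix_mulVec_repr, hx, map_smul, Finsupp.coe_smul]
  have hφ : b.repr x ⬝ᵥ (φ ∘ b) = φ x := by
    conv_rhs => rw [← b.sum_repr x]
    simp only [dotProduct, Function.comp_apply, map_sum, map_smul, smul_eq_mul]
  rw [← LinearMap.charpoly_toMatrix f b, ← LinearMap.charpoly_toMatrix _ b, map_add,
    LinearMap.toMatrix_smulRight, X_sub_C_mul_charpoly_add_vecMulVec heigen, hφ]

theorem charpoly_toMatrix' (f : (n → R) →ₗ[R] (n → R)) :
    (LinearMap.toMatrix' f).charpoly = f.charpoly := by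
  rw [← LinearMap.toMatrix_eq_toMatrix', LinearMap.charpoly_toMatrix]

theorem charpoly_mul_toMatrix' (A : Matrix n n R) (f : (n → R) →ₗ[R] (n → R)) :
    (A * LinearMap.toMatrix' f).charpoly = (A.mulVecLin ∘ₗ f).charpoly := by
  rw [← charpoly_toMatrix', LinearMap.toMatrix'_comp, ← toLin'_apply',
    LinearMap.toMatrix'_toLin']

end RankOnePerturbation

section Petviashvili

variable {E G : Type*} [NormedAddCommGroup E] [NormedSpace ℝ E] [NormedAddCommGroup G]
  [NormedSpace ℝ G]

theorem euler_identity_of_homogeneous {N : E → G} {N' : E →L[ℝ] G} {x : E} {p : ℝ}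
    (hN : HasFDerivAt N N' x) (hhom : ∀ t : ℝ, 0 < t → N (t • x) = t ^ p • N x) :
    N' x = p • N x := by
  have hline : HasDerivAt (fun t : ℝ => t • x) x 1 := by
    simpa only [id, one_smul] using (hasDerivAt_id (1 : ℝ)).smul_const x
  have hchain : HasDerivAt (fun t : ℝ => N (t • x)) (N' x) 1 :=
    HasFDerivAt.comp_hasDerivAt 1 (by rwa [one_smul]) hline
  have hpower : HasDerivAt (fun t : ℝ => t ^ p • N x) (p • N x) 1 := by
    simpa only [Real.one_rpow, mul_one] using
      (Real.hasDerivAt_rpow_const (x := 1) (p := p) (.inl one_ne_zero)).smul_const (N x)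
  refine hchain.unique (hpower.congr_of_eventuallyEq ?_)
  filter_upwards [lt_mem_nhds one_pos] with t ht using hhom t ht

theorem hasFDerivAt_div_of_apply_eq {𝕜 V : Type*} [NontriviallyNormedField 𝕜]
    [NormedAddCommGroup V] [NormedSpace 𝕜 V] {f g : V → 𝕜} {f' g' : V →L[𝕜] 𝕜} {x : V}
    (hf : HasFDerivAt f f' x) (hg : HasFDerivAt g g' x) (hfg : f x = g x) (hne : g x ≠ 0) :
    HasFDerivAt (fun y => f y / g y) ((g x)⁻¹ • (f' - g')) x := by
  have hinv : HasFDerivAt (fun y => (g y)⁻¹) (-(g x ^ 2)⁻¹ • g') x :=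
    (hasDerivAt_inv hne).comp_hasFDerivAt x hg
  simp only [div_eq_mul_inv]
  refine (hf.fun_mul hinv).congr_fderiv ?_
  rw [hfg, smul_smul, smul_sub, sub_eq_neg_add, ← neg_smul]
  congr 2
  field_simp

/-- The stabilizing factor `m(x) = ⟨L x, x⟩ / ⟨N x, x⟩`, with the inner product replaced by an
arbitrary continuous pairing `B`. It takes the junk value `0` where `B (N x) x = 0`. -/
noncomputable def stabilizingFactor (B : G →L[ℝ] E →L[ℝ] ℝ) (L N : E → G) (x : E) : ℝ :=
  B (L x) x / B (N x) x

/-- The iteration map `F(x) = m(x)^γ • L⁻¹ N(x)` of the Petviashvili method with exponent `γ`. The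
inverse of `L` is a separate argument `K`, so that a continuous left inverse is allowed. -/
noncomputable def petviashviliMap (B : G →L[ℝ] E →L[ℝ] ℝ) (L : E → G) (K : G →L[ℝ] E) (N : E → G)
    (γ : ℝ) (x : E) : E :=
  stabilizingFactor B L N x ^ γ • K (N x)

variable {B : G →L[ℝ] E →L[ℝ] ℝ} {L N : E → G} {L' N' : E →L[ℝ] G} {x : E}

theorem stabilizingFactor_eq_one (hfix : L x = N x) (hne : B (N x) x ≠ 0) :
    stabilizingFactor B L N x = 1 := by
  rw [stabilizingFactor, hfix, div_self hne]

theorem hasFDerivAt_stabilizingFactor (hL : HasFDerivAt L L' x) (hN : HasFDerivAt N N' x)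
    (hfix : L x = N x) (hne : B (N x) x ≠ 0) :
    HasFDerivAt (stabilizingFactor B L N) ((B (N x) x)⁻¹ • B.flip x ∘L (L' - N')) x := by
  have hnum := B.hasFDerivAt_of_bilinear hL (hasFDerivAt_id x)
  have hden := B.hasFDerivAt_of_bilinear hN (hasFDerivAt_id x)
  refine (hasFDerivAt_div_of_apply_eq hnum hden (by rw [hfix]) hne).congr_fderiv ?_
  ext v
  simp [hfix]

theorem hasFDerivAt_petviashviliMap {K : G →L[ℝ] E} (hL : HasFDerivAt L L' x)
    (hN : HasFDerivAt N N' x) (hfix : L x = N x) (hK : K (N x) = x) (hne : B (N x) x ≠ 0) (γ : ℝ) :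
    HasFDerivAt (petviashviliMap B L K N γ)
      (K ∘L N' + ((γ / B (N x) x) • B.flip x ∘L (L' - N')).smulRight x) x := by
  have hm := stabilizingFactor_eq_one hfix hne
  have hpow := (hasFDerivAt_stabilizingFactor hL hN hfix hne).rpow_const (p := γ)
    (.inl (hm.trans_ne one_ne_zero))
  refine (hpow.fun_smul (K.hasFDerivAt.comp x hN)).congr_fderiv ?_
  ext v
  simp [hm, hK, div_eq_mul_inv, mul_assoc]

theorem petviashvili_optimal_parameter_charpoly_general [FiniteDimensional ℝ E]
    (B : G →L[ℝ] E →L[ℝ] ℝ) (L : E →L[ℝ] G) (K : G →L[ℝ] E) (hK : Function.LeftInverse K L)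
    {N : E → G} {p : ℝ} (hp : p ≠ 1) {x : E} (hN : DifferentiableAt ℝ N x)
    (hhom : ∀ t : ℝ, 0 < t → N (t • x) = t ^ p • N x) (hfix : L x = N x) (hne : B (N x) x ≠ 0) :
    (X - C p) * (fderiv ℝ (petviashviliMap B L K N (p / (p - 1))) x : E →ₗ[ℝ] E).charpoly =
      X * (K ∘L fderiv ℝ N x : E →ₗ[ℝ] E).charpoly := by
  have heuler : fderiv ℝ N x x = p • N x := euler_identity_of_homogeneous hN.hasFDerivAt hhom
  have hKN : K (N x) = x := hfix ▸ hK x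
  have heigen : (K ∘L fderiv ℝ N x) x = p • x := by
    rw [ContinuousLinearMap.comp_apply, heuler, map_smul, hKN]
  set φ : E →L[ℝ] ℝ := (p / (p - 1) / B (N x) x) • B.flip x ∘L (L - fderiv ℝ N x) with hφ
  have hφx : φ x = -p := by
    have hp' : p - 1 ≠ 0 := sub_ne_zero.mpr hp
    calc φ x = p / (p - 1) / B (N x) x * (B (N x) x - p * B (N x) x) := by
          simp [hφ, heuler, hfix]
      _ = -p := by
          field_simp
          ring
  have hbrauer := X_sub_C_mul_charpoly_add_smulRight (f := (K ∘L fderiv ℝ N x : E →ₗ[ℝ] E))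
    heigen (φ : E →ₗ[ℝ] ℝ)
  rw [ContinuousLinearMap.coe_coe, hφx, add_neg_cancel, C_0, sub_zero] at hbrauer
  rw [(hasFDerivAt_petviashviliMap L.hasFDerivAt hN.hasFDerivAt hfix hKN hne _).fderiv]
  exact hbrauer

end Petviashvili

theorem petviashvili_optimal_parameter_charpoly
    {m : ℕ} (L : Matrix (Fin m) (Fin m) ℝ) (hL : IsUnit L.det)
    (N : (Fin m → ℝ) → (Fin m → ℝ)) (p : ℝ) (hp : p ≠ 1) (xs : Fin m → ℝ)
    (hhom : ∀ t : ℝ, 0 < t → ∀ x : Fin m → ℝ, N (t • x) = (t ^ p) • N x)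
    (hC1 : ContDiffAt ℝ 1 N xs)
    (hfix : L.mulVec xs = N xs)
    (hne : N xs ⬝ᵥ xs ≠ 0)
    (γ : ℝ) (hγ : γ = p / (p - 1)) :
    (X - C p) *
      (LinearMap.toMatrix'
        ((fderiv ℝ
          (fun x => ((L.mulVec x ⬝ᵥ x) / (N x ⬝ᵥ x)) ^ γ • L⁻¹.mulVec (N x)) xs :
            (Fin m → ℝ) →ₗ[ℝ] (Fin m → ℝ)))).charpoly
      = X * (L⁻¹ * LinearMap.toMatrix'
          ((fderiv ℝ N xs : (Fin m → ℝ) →ₗ[ℝ] (Fin m → ℝ)))).charpoly := by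
  have hinv : Function.LeftInverse L⁻¹.mulVecLin L.mulVecLin := fun v => by
    simp only [mulVecLin_apply, mulVec_mulVec, nonsing_inv_mul _ hL, one_mulVec]
  rw [hγ, charpoly_toMatrix', charpoly_mul_toMatrix']
  exact petviashvili_optimal_parameter_charpoly_general
    (dotProductBilin ℝ ℝ).toContinuousBilinearMap L.mulVecLin.toContinuousLinearMap
    L⁻¹.mulVecLin.toContinuousLinearMap hinv hp (hC1.differentiableAt one_ne_zero)
    (fun t ht => hhom t ht xs) hfix hne
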